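/- Let G be a concordance-inducing distribution function and let P ∈ [−1,1]^{d×d} be the Pearson correlation matrix of some random vector B = (B1,…,Bd) with all margins Bern(1/2). Let U be uniform on (0,1), independent of B, and define Vj = Bj·U + (1 − Bj)(1 − U) and Yj = G^{-1}(Vj) for j = 1,…,d. Then each Vj is uniform on (0,1), each Yj has distribution G, and ρ(Yi, Yj) = ρ(Bi, Bj) for all i, j; consequently P ∈ K_G, i.e., every Bern(1/2)-compatible matrix is κ_G-compatible: P^B_d(1/2) ⊆ K_G. -/

import Mathlib

open MeasureTheory ProbabilityTheory Set

noncomputable section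

/-- The uniform distribution on (0,1). -/
def unif01 : Measure ℝ := volume.restrict (Set.Ioo (0:ℝ) 1)

/-- Pearson's correlation coefficient of two real random variables. -/
def pearson {Ω : Type*} [MeasurableSpace Ω] (μ : Measure Ω) (Y1 Y2 : Ω → ℝ) : ℝ :=
  ((∫ ω, Y1 ω * Y2 ω ∂μ) - (∫ ω, Y1 ω ∂μ) * (∫ ω, Y2 ω ∂μ)) /
    Real.sqrt (variance Y1 μ * variance Y2 μ)

/-- The distribution function (CDF) of a measure on ℝ. -/
def cdfOf (ν : Measure ℝ) : ℝ → ℝ := fun x => (ν (Set.Iic x)).toReal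

/-- The quantile function (generalized inverse) of a distribution function. -/
def quantileFn (G : ℝ → ℝ) (p : ℝ) : ℝ := sInf {x : ℝ | p ≤ G x}

/-- A distribution on ℝ is symmetric (about some point `m`). -/
def SymmetricDist (G : Measure ℝ) : Prop :=
  ∃ m : ℝ, G.map (fun x => 2 * m - x) = G

/-- A distribution on ℝ is non-degenerate: it is not a point mass. -/
def Nondegenerate (G : Measure ℝ) : Prop := ∀ c : ℝ, G ≠ Measure.dirac c

/-- A distribution is concordance inducing: non-degenerate, symmetric,
with finite second moment. -/
def ConcordanceInducing (G : Measure ℝ) : Prop :=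
  Nondegenerate G ∧ SymmetricDist G ∧ Integrable (fun x : ℝ => x ^ 2) G

/-- `corrSet ν d` is the set of `d×d` Pearson correlation matrices of random vectors
all of whose margins have distribution `ν`. -/
def corrSet (ν : Measure ℝ) (d : ℕ) : Set (Matrix (Fin d) (Fin d) ℝ) :=
  {P | ∃ μ : Measure (Fin d → ℝ), IsProbabilityMeasure μ ∧
        (∀ j, μ.map (fun x => x j) = ν) ∧
        (∀ i j, P i j = pearson μ (fun x => x i) (fun x => x j))}

/-- The Bernoulli distribution `Bern(p)` on ℝ. -/
def bern (p : ℝ) : Measure ℝ :=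
  ENNReal.ofReal p • Measure.dirac (1:ℝ) + ENNReal.ofReal (1 - p) • Measure.dirac (0:ℝ)

/-- The set of `d×d` correlation matrices of random vectors with `Bern(1/2)` margins. -/
def PBd (d : ℕ) : Set (Matrix (Fin d) (Fin d) ℝ) := corrSet (bern (1/2)) d

/-- The set of all `d×d` correlation matrices: symmetric positive semi-definite
matrices with entries in `[-1,1]` and unit diagonal. -/
def Pd (d : ℕ) : Set (Matrix (Fin d) (Fin d) ℝ) :=
  {P | P.IsSymm ∧ (∀ i j, P i j ∈ Set.Icc (-1:ℝ) 1) ∧ P.PosSemidef ∧ ∀ i, P i i = 1}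

/-!
Reflecting a uniform variable `U` at `1/2` leaves its law unchanged, so flipping a coin `Bⱼ` to
choose between `U` and `1 - U` gives a uniform `Vⱼ`, and the quantile transform gives `Yⱼ` the law
`G`. If `G` is symmetric about `m`, then `G⁻¹(1 - u) - m = -(G⁻¹(u) - m)` for almost every `u`, so
`Yⱼ - m = (Bⱼ - 1/2) * W` with the single factor `W = 2 * (G⁻¹(U) - m)` independent of `B`. As each
`Bⱼ - 1/2` is centered, multiplying by `W` scales all covariances and variances by `E[W²]`, which is
positive because `G` is not a point mass, and hence leaves every correlation unchanged.
-/

section GeneralProbability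

variable {Ω : Type*} {mΩ : MeasurableSpace Ω} {μ : Measure Ω}

lemma memLp_of_hasLaw {E : Type*} [NormedAddCommGroup E] [MeasurableSpace E] {ν : Measure E}
    {X : Ω → E} {p : ENNReal} (hX : HasLaw X ν μ) (hν : MemLp id p ν) : MemLp X p μ :=
  (hX.map_eq.symm ▸ hν).comp_of_map hX.aemeasurable

/- Composing with `arctan` makes both variables integrable, with equal integrals. -/
lemma ae_eq_of_ae_le_of_identDistrib [IsFiniteMeasure μ] {X Y : Ω → ℝ} (hXY : X ≤ᵐ[μ] Y)
    (hident : IdentDistrib X Y μ μ) : X =ᵐ[μ] Y := by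
  have integrable_arctan {Z : Ω → ℝ} (hZ : AEMeasurable Z μ) :
      Integrable (fun ω => Real.arctan (Z ω)) μ :=
    .of_bound (Real.measurable_arctan.comp_aemeasurable hZ).aestronglyMeasurable (Real.pi / 2)
      (.of_forall fun ω => abs_le.2
        ⟨(Real.neg_pi_div_two_lt_arctan (Z ω)).le, (Real.arctan_lt_pi_div_two (Z ω)).le⟩)
  have hle : (fun ω => Real.arctan (X ω)) ≤ᵐ[μ] fun ω => Real.arctan (Y ω) := by
    filter_upwards [hXY] with ω hω using Real.arctan_mono hω
  have heq := (integral_eq_iff_of_ae_le (integrable_arctan hident.aemeasurable_fst)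
    (integrable_arctan hident.aemeasurable_snd) hle).1
    (hident.comp Real.measurable_arctan).integral_eq
  filter_upwards [heq] with ω hω using Real.arctan_injective hω

end GeneralProbability

section Pearson

variable {Ω : Type*} {mΩ : MeasurableSpace Ω} {μ : Measure Ω} {X Y W : Ω → ℝ}

lemma pearson_eq_covariance_div [IsProbabilityMeasure μ] (hX : MemLp X 2 μ) (hY : MemLp Y 2 μ) :
    pearson μ X Y = cov[X, Y; μ] / √(Var[X; μ] * Var[Y; μ]) := by
  rw [covariance_eq_sub hX hY]; rfl

lemma pearson_congr_ae {X' Y' : Ω → ℝ} (hX : X =ᵐ[μ] X') (hY : Y =ᵐ[μ] Y') :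
    pearson μ X Y = pearson μ X' Y' := by
  have hXY : ∫ ω, X ω * Y ω ∂μ = ∫ ω, X' ω * Y' ω ∂μ := integral_congr_ae (hX.mul hY)
  rw [pearson, pearson, hXY, integral_congr_ae hX, integral_congr_ae hY,
    variance_congr hX, variance_congr hY]

lemma pearson_comp_of_hasLaw {E : Type*} {mE : MeasurableSpace E} {ν : Measure E} {Z : Ω → E}
    {f g : E → ℝ} (hZ : HasLaw Z ν μ) (hf : AEMeasurable f ν) (hg : AEMeasurable g ν) :
    pearson μ (fun ω => f (Z ω)) (fun ω => g (Z ω)) = pearson ν f g := by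
  obtain ⟨hZ, rfl⟩ := hZ
  have hfg : ∫ z, f z * g z ∂μ.map Z = ∫ ω, f (Z ω) * g (Z ω) ∂μ :=
    integral_map hZ (hf.mul hg).aestronglyMeasurable
  rw [pearson, pearson, hfg, integral_map hZ hf.aestronglyMeasurable,
    integral_map hZ hg.aestronglyMeasurable, variance_map hf hZ, variance_map hg hZ]
  rfl

lemma pearson_sub_const [IsProbabilityMeasure μ] (hX : MemLp X 2 μ) (hY : MemLp Y 2 μ)
    (a b : ℝ) : pearson μ (fun ω => X ω - a) (fun ω => Y ω - b) = pearson μ X Y := by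
  have hXa : MemLp (fun ω => X ω - a) 2 μ := hX.sub (memLp_const a)
  have hYb : MemLp (fun ω => Y ω - b) 2 μ := hY.sub (memLp_const b)
  rw [pearson_eq_covariance_div hXa hYb, pearson_eq_covariance_div hX hY,
    covariance_sub_const_left (hX.integrable one_le_two),
    covariance_sub_const_right (hY.integrable one_le_two),
    variance_sub_const hX.aestronglyMeasurable, variance_sub_const hY.aestronglyMeasurable]

lemma variance_mul_of_indepFun (hX : AEMeasurable X μ) (hW : AEMeasurable W μ)
    (hX0 : μ[X] = 0) (hindep : X ⟂ᵢ[μ] W) :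
    Var[fun ω => X ω * W ω; μ] = Var[X; μ] * ∫ ω, W ω ^ 2 ∂μ := by
  have hmean : ∫ ω, X ω * W ω ∂μ = 0 := by
    rw [hindep.integral_fun_mul_eq_mul_integral hX.aestronglyMeasurable hW.aestronglyMeasurable,
      hX0, zero_mul]
  have hindep_sq : (fun ω => X ω ^ 2) ⟂ᵢ[μ] (fun ω => W ω ^ 2) :=
    hindep.comp (φ := (· ^ 2)) (ψ := (· ^ 2)) (by fun_prop) (by fun_prop)
  rw [variance_of_integral_eq_zero (by fun_prop) hmean, variance_of_integral_eq_zero hX hX0,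
    ← hindep_sq.integral_fun_mul_eq_mul_integral (hX.pow_const 2).aestronglyMeasurable
      (hW.pow_const 2).aestronglyMeasurable]
  simp only [mul_pow]

lemma pearson_mul_of_indepFun (hX : AEMeasurable X μ) (hY : AEMeasurable Y μ)
    (hW : AEMeasurable W μ) (hX0 : μ[X] = 0) (hY0 : μ[Y] = 0)
    (hindep : (fun ω => (X ω, Y ω)) ⟂ᵢ[μ] W) (hW2 : ∫ ω, W ω ^ 2 ∂μ ≠ 0) :
    pearson μ (fun ω => X ω * W ω) (fun ω => Y ω * W ω) = pearson μ X Y := by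
  have hXW : X ⟂ᵢ[μ] W := hindep.comp measurable_fst measurable_id
  have hYW : Y ⟂ᵢ[μ] W := hindep.comp measurable_snd measurable_id
  have hXYW : (fun ω => X ω * Y ω) ⟂ᵢ[μ] (fun ω => W ω ^ 2) :=
    hindep.comp (φ := fun z : ℝ × ℝ => z.1 * z.2) (ψ := (· ^ 2)) (by fun_prop) (by fun_prop)
  have hprod : ∫ ω, X ω * W ω * (Y ω * W ω) ∂μ = (∫ ω, X ω * Y ω ∂μ) * ∫ ω, W ω ^ 2 ∂μ := by
    rw [← hXYW.integral_fun_mul_eq_mul_integral (hX.mul hY).aestronglyMeasurable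
      (hW.pow_const 2).aestronglyMeasurable]
    congr with ω
    ring
  rw [pearson, pearson, hprod, variance_mul_of_indepFun hX hW hX0 hXW,
    variance_mul_of_indepFun hY hW hY0 hYW,
    hXW.integral_fun_mul_eq_mul_integral hX.aestronglyMeasurable hW.aestronglyMeasurable, hX0, hY0,
    mul_mul_mul_comm, Real.sqrt_mul' _ (mul_self_nonneg _),
    Real.sqrt_mul_self (integral_nonneg fun ω => sq_nonneg (W ω))]
  simp only [zero_mul, sub_zero]
  exact mul_div_mul_right _ _ hW2

lemma pearson_sub_integral_mul_of_indepFun [IsProbabilityMeasure μ] (hX : MemLp X 2 μ)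
    (hY : MemLp Y 2 μ) (hW : AEMeasurable W μ) (hindep : (fun ω => (X ω, Y ω)) ⟂ᵢ[μ] W)
    (hW2 : ∫ ω, W ω ^ 2 ∂μ ≠ 0) :
    pearson μ (fun ω => (X ω - μ[X]) * W ω) (fun ω => (Y ω - μ[Y]) * W ω) = pearson μ X Y := by
  have hcentered {Z : Ω → ℝ} (hZ : MemLp Z 2 μ) : ∫ ω, Z ω - μ[Z] ∂μ = 0 := by
    simp [integral_sub (hZ.integrable one_le_two) (integrable_const _)]
  have hindep_sub : (fun ω => (X ω - μ[X], Y ω - μ[Y])) ⟂ᵢ[μ] W :=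
    hindep.comp (measurable_fst.sub_const _ |>.prodMk (measurable_snd.sub_const _)) measurable_id
  rw [pearson_mul_of_indepFun (hX.aemeasurable.sub_const _) (hY.aemeasurable.sub_const _) hW
    (hcentered hX) (hcentered hY) hindep_sub hW2, pearson_sub_const hX hY]

lemma mem_corrSet_of_hasLaw [IsProbabilityMeasure μ] {ν : Measure ℝ} {d : ℕ}
    {P : Matrix (Fin d) (Fin d) ℝ} {Z : Fin d → Ω → ℝ} (hZ : ∀ j, HasLaw (Z j) ν μ)
    (hP : ∀ i j, P i j = pearson μ (Z i) (Z j)) : P ∈ corrSet ν d := by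
  have hvec : HasLaw (fun ω j => Z j ω) (μ.map fun ω j => Z j ω) μ :=
    ⟨aemeasurable_pi_lambda _ fun j => (hZ j).aemeasurable, rfl⟩
  refine ⟨_, Measure.isProbabilityMeasure_map hvec.aemeasurable, fun j => ?_, fun i j => ?_⟩
  · rw [AEMeasurable.map_map_of_aemeasurable (measurable_pi_apply j).aemeasurable hvec.aemeasurable]
    exact (hZ j).map_eq
  · rw [hP i j]
    exact pearson_comp_of_hasLaw hvec (measurable_pi_apply i).aemeasurable
      (measurable_pi_apply j).aemeasurable

end Pearson

section Uniform

instance : IsProbabilityMeasure unif01 := ⟨by simp [unif01]⟩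

lemma ae_unif01_mem_Ioo : ∀ᵐ u ∂unif01, u ∈ Ioo (0 : ℝ) 1 := ae_restrict_mem measurableSet_Ioo

lemma unif01_Iic {t : ℝ} (ht : t ≤ 1) : unif01 (Iic t) = ENNReal.ofReal t := by
  have hinter : Iic t ∩ Ioc 0 1 = Ioc 0 t := by
    rw [inter_comm, Ioc_inter_Iic, inf_eq_right.2 ht]
  rw [unif01, restrict_Ioo_eq_restrict_Ioc, Measure.restrict_apply measurableSet_Iic, hinter,
    Real.volume_Ioc, sub_zero]

lemma hasLaw_one_sub_unif01 : HasLaw (fun u => 1 - u) unif01 unif01 := by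
  have h := (Measure.measurePreserving_sub_left (volume : Measure ℝ) 1).restrict_preimage
    (s := Ioo (0 : ℝ) 1) measurableSet_Ioo
  rw [preimage_const_sub_Ioo, sub_self, sub_zero] at h
  exact h.hasLaw

end Uniform

section Quantile

lemma quantileFn_le_iff (F : StieltjesFunction ℝ) {p : ℝ} (hlt : ∃ y, F y < p)
    (hle : ∃ y, p ≤ F y) (x : ℝ) : quantileFn F p ≤ x ↔ p ≤ F x := by
  have hbdd : BddBelow {x | p ≤ F x} := by
    obtain ⟨y, hy⟩ := hlt
    exact ⟨y, fun z hz => (F.mono.reflect_lt (hy.trans_le hz)).le⟩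
  have hattained : p ≤ F (quantileFn F p) := by
    have hright : Filter.Tendsto F (nhdsWithin (quantileFn F p) (Ioi (quantileFn F p)))
        (nhds (F (quantileFn F p))) :=
      (F.right_continuous _).mono Ioi_subset_Ici_self
    refine ge_of_tendsto hright ?_
    filter_upwards [self_mem_nhdsWithin] with y hy
    obtain ⟨z, hz, hzy⟩ := exists_lt_of_csInf_lt hle hy
    exact le_trans hz (F.mono hzy.le)
  exact ⟨fun h => hattained.trans (F.mono h), fun h => csInf_le hbdd h⟩

variable (G : Measure ℝ) [IsProbabilityMeasure G]

lemma cdfOf_eq_cdf : cdfOf G = cdf G := by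
  ext x
  rw [cdf_eq_real]; rfl

lemma quantileFn_cdfOf_le_iff {p : ℝ} (hp : p ∈ Ioo (0 : ℝ) 1) (x : ℝ) :
    quantileFn (cdfOf G) p ≤ x ↔ p ≤ cdfOf G x := by
  rw [cdfOf_eq_cdf]
  exact quantileFn_le_iff (cdf G) ((tendsto_cdf_atBot G).eventually_lt_const hp.1).exists
    ((tendsto_cdf_atTop G).eventually_const_le hp.2).exists x

lemma monotoneOn_quantileFn_cdfOf : MonotoneOn (quantileFn (cdfOf G)) (Ioo 0 1) :=
  fun _ hp _ hq hpq => (quantileFn_cdfOf_le_iff G hp _).2 <|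
    hpq.trans ((quantileFn_cdfOf_le_iff G hq _).1 le_rfl)

lemma hasLaw_quantileFn_cdfOf : HasLaw (quantileFn (cdfOf G)) G unif01 := by
  have hmeas : AEMeasurable (quantileFn (cdfOf G)) unif01 :=
    aemeasurable_restrict_of_monotoneOn measurableSet_Ioo (monotoneOn_quantileFn_cdfOf G)
  have := Measure.isProbabilityMeasure_map hmeas
  refine ⟨hmeas, Measure.ext_of_Iic _ _ fun x => ?_⟩
  have hpreimage : quantileFn (cdfOf G) ⁻¹' Iic x =ᵐ[unif01] Iic (cdfOf G x) := by
    filter_upwards [ae_unif01_mem_Ioo] with u hu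
    exact propext (quantileFn_cdfOf_le_iff G hu x)
  rw [Measure.map_apply_of_aemeasurable hmeas measurableSet_Iic, measure_congr hpreimage,
    cdfOf_eq_cdf, unif01_Iic (cdf_le_one G x), ofReal_cdf]

end Quantile

section Symmetric

variable {G : Measure ℝ} [IsProbabilityMeasure G] {m : ℝ}

lemma one_sub_cdfOf_le (hm : HasLaw (fun x => 2 * m - x) G G) (x : ℝ) :
    1 - cdfOf G x ≤ cdfOf G (2 * m - x) := by
  calc 1 - cdfOf G x
      = G.real (Ioi x) := by
        rw [← compl_Iic, probReal_compl_eq_one_sub measurableSet_Iic]; rfl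
    _ = G.real (Iio (2 * m - x)) := by
        have hreflect : G.real {y | x < 2 * m - y} = G.real (Ioi x) :=
          hm.measureReal_eq measurableSet_Ioi
        simp only [← hreflect, lt_sub_comm (a := x)]
        rfl
    _ ≤ cdfOf G (2 * m - x) := measureReal_mono Iio_subset_Iic_self

lemma quantileFn_le_sub_quantileFn_one_sub (hm : HasLaw (fun x => 2 * m - x) G G)
    {p : ℝ} (hp : p ∈ Ioo (0 : ℝ) 1) :
    quantileFn (cdfOf G) p ≤ 2 * m - quantileFn (cdfOf G) (1 - p) := by
  have hp' : 1 - p ∈ Ioo (0 : ℝ) 1 := ⟨sub_pos.2 hp.2, sub_lt_self 1 hp.1⟩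
  refine le_of_forall_gt_imp_ge_of_dense fun z hz => ?_
  have hcdf : cdfOf G (2 * m - z) < 1 - p := by
    rw [← not_le, ← quantileFn_cdfOf_le_iff G hp', not_le]
    linarith
  have hsymm : 1 - cdfOf G (2 * m - z) ≤ cdfOf G z := by
    simpa only [sub_sub_cancel] using one_sub_cdfOf_le hm (2 * m - z)
  rw [quantileFn_cdfOf_le_iff G hp]
  linarith

/- The identity can fail at the jumps of the quantile function, which is left-continuous. -/
lemma quantileFn_one_sub_ae_eq (hm : HasLaw (fun x => 2 * m - x) G G) :
    ∀ᵐ u ∂unif01, quantileFn (cdfOf G) (1 - u) = 2 * m - quantileFn (cdfOf G) u := by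
  have hle : quantileFn (cdfOf G) ≤ᵐ[unif01] fun u => 2 * m - quantileFn (cdfOf G) (1 - u) := by
    filter_upwards [ae_unif01_mem_Ioo] with u hu using quantileFn_le_sub_quantileFn_one_sub hm hu
  have hlaw : HasLaw (fun u => 2 * m - quantileFn (cdfOf G) (1 - u)) G unif01 :=
    hm.fun_comp ((hasLaw_quantileFn_cdfOf G).fun_comp hasLaw_one_sub_unif01)
  have heq := ae_eq_of_ae_le_of_identDistrib hle ((hasLaw_quantileFn_cdfOf G).identDistrib hlaw)
  filter_upwards [heq] with u hu
  rw [hu, sub_sub_cancel]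

lemma integral_sub_const_sq_ne_zero (hnd : Nondegenerate G) (hL2 : MemLp id 2 G) (c : ℝ) :
    ∫ x, (x - c) ^ 2 ∂G ≠ 0 := by
  intro hzero
  have hint : Integrable (fun x => (x - c) ^ 2) G := (hL2.sub (memLp_const c)).integrable_sq
  have hconst : id =ᵐ[G] fun _ => c := by
    filter_upwards [(integral_eq_zero_iff_of_nonneg (fun x => sq_nonneg (x - c)) hint).1 hzero]
      with x hx using sub_eq_zero.1 (pow_eq_zero_iff two_ne_zero |>.1 hx)
  exact hnd c (HasLaw.id.map_eq.symm.trans (hasLaw_dirac_of_ae_eq hconst).map_eq)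

lemma integral_quantileFn_sub_const_sq_ne_zero (hnd : Nondegenerate G) (hL2 : MemLp id 2 G)
    (c : ℝ) : ∫ u, (quantileFn (cdfOf G) u - c) ^ 2 ∂unif01 ≠ 0 := by
  have hlaw : ∫ u, (quantileFn (cdfOf G) u - c) ^ 2 ∂unif01 = ∫ x, (x - c) ^ 2 ∂G :=
    (hasLaw_quantileFn_cdfOf G).integral_comp (f := fun x => (x - c) ^ 2) (by fun_prop)
  rw [hlaw]
  exact integral_sub_const_sq_ne_zero hnd hL2 c

end Symmetric

section Bernoulli

instance (p : ℝ) : IsFiniteMeasure (bern p) := by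
  have hsmul (q c : ℝ) : IsFiniteMeasure (ENNReal.ofReal q • Measure.dirac c) :=
    Measure.smul_finite _ ENNReal.ofReal_ne_top
  unfold bern
  infer_instance

lemma ae_bern_eq_zero_or_one (p : ℝ) : ∀ᵐ x ∂bern p, x = 0 ∨ x = 1 := by
  simp [bern, ae_iff]

lemma integral_id_bern {p : ℝ} (hp : 0 ≤ p) : ∫ x, x ∂bern p = p := by
  have hint (c : ℝ) : Integrable (fun x => x) (Measure.dirac c) := integrable_dirac (by simp)
  rw [bern, integral_add_measure ((hint 1).smul_measure (by simp))
    ((hint 0).smul_measure (by simp))]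
  simp [hp]

lemma memLp_id_bern (p : ℝ) (q : ENNReal) : MemLp id q (bern p) := by
  refine .of_bound aestronglyMeasurable_id 1 ?_
  filter_upwards [ae_bern_eq_zero_or_one p] with x hx
  rcases hx with rfl | rfl <;> simp

end Bernoulli

section BernReflect

/-- The value `V = b * u + (1 - b) * (1 - u)` built from a coin `b` and a uniform variate `u`: it is
`u` if `b = 1` and the reflected variate `1 - u` if `b = 0`. -/
def bernReflect (b u : ℝ) : ℝ := b * u + (1 - b) * (1 - u)

lemma bernReflect_one (u : ℝ) : bernReflect 1 u = u := by simp [bernReflect]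

lemma bernReflect_zero (u : ℝ) : bernReflect 0 u = 1 - u := by simp [bernReflect]

lemma measurable_bernReflect : Measurable fun z : ℝ × ℝ => bernReflect z.1 z.2 := by
  unfold bernReflect
  fun_prop

lemma hasLaw_bernReflect_prod {p : ℝ} (hp : p ∈ Icc (0 : ℝ) 1) :
    HasLaw (fun z : ℝ × ℝ => bernReflect z.1 z.2) unif01 ((bern p).prod unif01) := by
  refine ⟨measurable_bernReflect.aemeasurable, ?_⟩
  have hmap (b : ℝ) : (((Measure.dirac b).prod unif01).map fun z => bernReflect z.1 z.2) =
      unif01.map (bernReflect b) := by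
    rw [Measure.dirac_prod, Measure.map_map measurable_bernReflect measurable_prodMk_left]
    rfl
  have hone : unif01.map (bernReflect 1) = unif01 := by
    rw [funext bernReflect_one]
    exact Measure.map_id
  have hzero : unif01.map (bernReflect 0) = unif01 := by
    rw [funext bernReflect_zero]
    exact hasLaw_one_sub_unif01.map_eq
  rw [bern, Measure.add_prod, Measure.prod_smul_left, Measure.prod_smul_left,
    Measure.map_add _ _ measurable_bernReflect, Measure.map_smul, Measure.map_smul, hmap, hmap,
    hone, hzero, ← add_smul, ← ENNReal.ofReal_add hp.1 (sub_nonneg.2 hp.2), add_sub_cancel,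
    ENNReal.ofReal_one, one_smul]

variable {Ω : Type*} {mΩ : MeasurableSpace Ω} {μ : Measure Ω} {B U : Ω → ℝ} {p m : ℝ}
  {G : Measure ℝ} [IsProbabilityMeasure G]

lemma hasLaw_bernReflect (hp : p ∈ Icc (0 : ℝ) 1) (hB : HasLaw B (bern p) μ)
    (hU : HasLaw U unif01 μ) (hindep : B ⟂ᵢ[μ] U) :
    HasLaw (fun ω => bernReflect (B ω) (U ω)) unif01 μ :=
  have := hU.isProbabilityMeasure
  (hasLaw_bernReflect_prod hp).fun_comp (hindep.hasLaw_prod hB hU)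

variable (G) in
lemma hasLaw_quantileFn_bernReflect (hp : p ∈ Icc (0 : ℝ) 1)
    (hB : HasLaw B (bern p) μ) (hU : HasLaw U unif01 μ) (hindep : B ⟂ᵢ[μ] U) :
    HasLaw (fun ω => quantileFn (cdfOf G) (bernReflect (B ω) (U ω))) G μ :=
  (hasLaw_quantileFn_cdfOf G).fun_comp (hasLaw_bernReflect hp hB hU hindep)

lemma quantileFn_bernReflect_sub_ae_eq (hm : HasLaw (fun x => 2 * m - x) G G)
    (hB : HasLaw B (bern p) μ) (hU : HasLaw U unif01 μ) :
    ∀ᵐ ω ∂μ, quantileFn (cdfOf G) (bernReflect (B ω) (U ω)) - m =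
      (B ω - 1 / 2) * (2 * (quantileFn (cdfOf G) (U ω) - m)) := by
  have hcoin : ∀ᵐ ω ∂μ, B ω = 0 ∨ B ω = 1 :=
    ae_of_ae_map hB.aemeasurable (hB.map_eq.symm ▸ ae_bern_eq_zero_or_one p)
  have hreflect : ∀ᵐ ω ∂μ,
      quantileFn (cdfOf G) (1 - U ω) = 2 * m - quantileFn (cdfOf G) (U ω) :=
    ae_of_ae_map hU.aemeasurable (hU.map_eq.symm ▸ quantileFn_one_sub_ae_eq hm)
  filter_upwards [hcoin, hreflect] with ω hω hUω
  rcases hω with h | h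
  · rw [h, bernReflect_zero, hUω]; ring
  · rw [h, bernReflect_one]; ring

lemma pearson_quantileFn_bernReflect {B₁ B₂ : Ω → ℝ} (hG : ConcordanceInducing G)
    (hB₁ : HasLaw B₁ (bern (1 / 2)) μ) (hB₂ : HasLaw B₂ (bern (1 / 2)) μ)
    (hU : HasLaw U unif01 μ) (hindep : (fun ω => (B₁ ω, B₂ ω)) ⟂ᵢ[μ] U) :
    pearson μ (fun ω => quantileFn (cdfOf G) (bernReflect (B₁ ω) (U ω)))
      (fun ω => quantileFn (cdfOf G) (bernReflect (B₂ ω) (U ω))) = pearson μ B₁ B₂ := by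
  have := hU.isProbabilityMeasure
  obtain ⟨hnd, ⟨m, hsymm⟩, hsq⟩ := hG
  have hm : HasLaw (fun x => 2 * m - x) G G := ⟨by fun_prop, hsymm⟩
  have hL2 : MemLp id 2 G := (memLp_two_iff_integrable_sq aestronglyMeasurable_id).2 hsq
  have hYL2 {B : Ω → ℝ} (hB : HasLaw B (bern (1 / 2)) μ) (hBU : B ⟂ᵢ[μ] U) :
      MemLp (fun ω => quantileFn (cdfOf G) (bernReflect (B ω) (U ω))) 2 μ :=
    memLp_of_hasLaw (hasLaw_quantileFn_bernReflect G (by norm_num) hB hU hBU) hL2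
  let W : ℝ → ℝ := fun u => 2 * (quantileFn (cdfOf G) u - m)
  have hW : AEMeasurable W unif01 :=
    ((hasLaw_quantileFn_cdfOf G).aemeasurable.sub_const m).const_mul 2
  have hWU : AEMeasurable W (μ.map U) := hU.map_eq.symm ▸ hW
  have hBW : (fun ω => (B₁ ω, B₂ ω)) ⟂ᵢ[μ] (fun ω => W (U ω)) :=
    hindep.comp₀ (hB₁.aemeasurable.prodMk hB₂.aemeasurable) hU.aemeasurable aemeasurable_id hWU
  have hW2 : ∫ ω, W (U ω) ^ 2 ∂μ ≠ 0 := by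
    have hlaw : ∫ ω, W (U ω) ^ 2 ∂μ = ∫ u, W u ^ 2 ∂unif01 :=
      hU.integral_comp (hW.pow_const 2).aestronglyMeasurable
    rw [hlaw]
    simp only [W, mul_pow, integral_const_mul]
    exact mul_ne_zero (by norm_num) (integral_quantileFn_sub_const_sq_ne_zero hnd hL2 m)
  calc pearson μ (fun ω => quantileFn (cdfOf G) (bernReflect (B₁ ω) (U ω)))
        (fun ω => quantileFn (cdfOf G) (bernReflect (B₂ ω) (U ω)))
      = pearson μ (fun ω => quantileFn (cdfOf G) (bernReflect (B₁ ω) (U ω)) - m)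
          (fun ω => quantileFn (cdfOf G) (bernReflect (B₂ ω) (U ω)) - m) :=
        (pearson_sub_const (hYL2 hB₁ (hindep.comp measurable_fst measurable_id))
          (hYL2 hB₂ (hindep.comp measurable_snd measurable_id)) m m).symm
    _ = pearson μ (fun ω => (B₁ ω - μ[B₁]) * W (U ω)) (fun ω => (B₂ ω - μ[B₂]) * W (U ω)) := by
        rw [hB₁.integral_eq, hB₂.integral_eq, integral_id_bern (by norm_num)]
        exact pearson_congr_ae (quantileFn_bernReflect_sub_ae_eq hm hB₁ hU)
          (quantileFn_bernReflect_sub_ae_eq hm hB₂ hU)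
    _ = pearson μ B₁ B₂ :=
        pearson_sub_integral_mul_of_indepFun (memLp_of_hasLaw hB₁ (memLp_id_bern _ 2))
          (memLp_of_hasLaw hB₂ (memLp_id_bern _ 2)) (hWU.comp_aemeasurable hU.aemeasurable) hBW hW2

end BernReflect

/-- given a random vector `B` with `Bern(1/2)` margins and correlation
matrix `P`, and `U ~ U(0,1)` independent of `B`, the variables
`Vj = Bj·U + (1 − Bj)(1 − U)` are uniform on (0,1), `Yj = G⁻¹(Vj)` have distribution
`G`, and `ρ(Yi,Yj) = ρ(Bi,Bj)`; hence `P ∈ K_G`: every `Bern(1/2)`-compatible matrix is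
`κ_G`-compatible. -/
theorem bernoulli_compatible_implies_kappaG_compatible
    (G : Measure ℝ) [IsProbabilityMeasure G] (hG : ConcordanceInducing G)
    (d : ℕ) (P : Matrix (Fin d) (Fin d) ℝ)
    (μB : Measure (Fin d → ℝ)) [IsProbabilityMeasure μB]
    (hmarg : ∀ j, μB.map (fun x => x j) = bern (1/2))
    (hP : ∀ i j, P i j = pearson μB (fun x => x i) (fun x => x j)) :
    (∀ j : Fin d, (μB.prod unif01).map
        (fun ω => ω.1 j * ω.2 + (1 - ω.1 j) * (1 - ω.2)) = unif01) ∧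
    (∀ j : Fin d, (μB.prod unif01).map
        (fun ω => quantileFn (cdfOf G) (ω.1 j * ω.2 + (1 - ω.1 j) * (1 - ω.2))) = G) ∧
    (∀ i j : Fin d, pearson (μB.prod unif01)
        (fun ω => quantileFn (cdfOf G) (ω.1 i * ω.2 + (1 - ω.1 i) * (1 - ω.2)))
        (fun ω => quantileFn (cdfOf G) (ω.1 j * ω.2 + (1 - ω.1 j) * (1 - ω.2)))
        = pearson μB (fun x => x i) (fun x => x j)) ∧
    P ∈ corrSet G d := by
  have hB (j : Fin d) : HasLaw (fun ω : (Fin d → ℝ) × ℝ => ω.1 j) (bern (1 / 2))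
      (μB.prod unif01) :=
    HasLaw.fun_comp ⟨(measurable_pi_apply j).aemeasurable, hmarg j⟩ measurePreserving_fst.hasLaw
  have hU : HasLaw Prod.snd unif01 (μB.prod unif01) := measurePreserving_snd.hasLaw
  have hindep : (Prod.fst : (Fin d → ℝ) × ℝ → _) ⟂ᵢ[μB.prod unif01] Prod.snd :=
    indepFun_prod measurable_id measurable_id
  have hhalf : (1 / 2 : ℝ) ∈ Icc 0 1 := by norm_num
  have hBU (j : Fin d) := hindep.comp (measurable_pi_apply j) measurable_id
  have hY (j : Fin d) := hasLaw_quantileFn_bernReflect G hhalf (hB j) hU (hBU j)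
  have hρB (i j : Fin d) : pearson (μB.prod unif01) (fun ω => ω.1 i) (fun ω => ω.1 j) =
      pearson μB (fun x => x i) (fun x => x j) :=
    pearson_comp_of_hasLaw (f := fun x : Fin d → ℝ => x i) (g := fun x => x j)
      measurePreserving_fst.hasLaw (measurable_pi_apply i).aemeasurable
      (measurable_pi_apply j).aemeasurable
  have hρY (i j : Fin d) := (pearson_quantileFn_bernReflect hG (hB i) (hB j) hU (hindep.comp
    ((measurable_pi_apply i).prodMk (measurable_pi_apply j)) measurable_id)).trans (hρB i j)
  exact ⟨fun j => (hasLaw_bernReflect hhalf (hB j) hU (hBU j)).map_eq, fun j => (hY j).map_eq, hρY,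
    mem_corrSet_of_hasLaw hY fun i j => (hP i j).trans (hρY i j).symm⟩
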